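/- The 2-sum M of the matrices B1 and B2 (the two special 5×5 totally unimodular building blocks from Seymour's decomposition theorem, 2-summed along the last column of B1 and the first row of B2) is totally unimodular but is not a network matrix. -/

import Mathlib

/-- A real matrix is totally unimodular if every square submatrix has determinant 0, +1 or -1. -/
def IsTU {m n : Type*} (A : Matrix m n ℝ) : Prop :=
  ∀ (k : ℕ) (f : Fin k → m) (g : Fin k → n), Function.Injective f → Function.Injective g →
    (A.submatrix f g).det ∈ ({0, 1, -1} : Set ℝ)

/-- The node-edge incidence matrix of a directed graph, given by its tail and head maps. -/
def digraphIncid {V E : Type*} [DecidableEq V] (tail head : E → V) : Matrix V E ℝ :=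
  Matrix.of fun v e =>
    if head e = tail e then 0
    else (if v = head e then 1 else 0) - (if v = tail e then 1 else 0)

/-- `N` is a network matrix: `[R | S]` is the incidence matrix of a directed graph (on node
set `Option m`) minus the row of the node `none`, `R` is an invertible basis part, and
`N = R⁻¹ * S`. -/
def IsNetworkMatrix {m n : Type*} [Fintype m] [DecidableEq m] [Fintype n]
    (N : Matrix m n ℝ) : Prop :=
  ∃ tail head : m ⊕ n → Option m,
    IsUnit ((digraphIncid tail head).submatrix some Sum.inl : Matrix m m ℝ).det ∧
    N = ((digraphIncid tail head).submatrix some Sum.inl : Matrix m m ℝ)⁻¹ *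
        (digraphIncid tail head).submatrix some Sum.inr

open Matrix

def dtZ : (n : ℕ) → (Fin n → Fin n → ℤ) → ℤ
  | 0, _ => 1
  | n + 1, A => ∑ j : Fin (n + 1), (-1) ^ (j : ℕ) * A 0 j * dtZ n (fun i k => A i.succ (j.succAbove k))

lemma dtZ_eq : ∀ (n : ℕ) (A : Matrix (Fin n) (Fin n) ℤ), A.det = dtZ n (fun i j => A i j)
  | 0, A => by simp [dtZ]
  | n + 1, A => by
    rw [det_succ_row_zero]
    refine Finset.sum_congr rfl fun j _ => ?_
    rw [dtZ_eq n]; rfl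

def SortedTU (A : Matrix (Fin 5) (Fin 5) ℤ) (k : ℕ) : Prop :=
  ∀ f : Fin k → Fin 5, (∀ i j, i < j → f i < f j) →
    ∀ g : Fin k → Fin 5, (∀ i j, i < j → g i < g j) →
      |dtZ k (fun i j => A (f i) (g j))| ≤ 1

def TUZ {m n : Type*} (A : Matrix m n ℤ) : Prop :=
  ∀ (k : ℕ) (f : Fin k → m) (g : Fin k → n), |(A.submatrix f g).det| ≤ 1

lemma TUZ.fintype {m n R : Type*} [Fintype R] [DecidableEq R]
    {A : Matrix m n ℤ} (h : TUZ A) (f : R → m) (g : R → n) : |(A.submatrix f g).det| ≤ 1 := by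
  have e := (Fintype.equivFin R).symm
  have := h _ (f ∘ e) (g ∘ e)
  rwa [← submatrix_submatrix, det_submatrix_equiv_self] at this

lemma TUZ_of_sorted {A : Matrix (Fin 5) (Fin 5) ℤ} (h : ∀ k < 6, SortedTU A k) : TUZ A := by
  intro k f g
  by_cases hf : f.Injective
  swap
  · obtain ⟨i, j, hij, hne⟩ := Function.not_injective_iff.1 hf
    rw [det_zero_of_row_eq hne (by ext x; simp [hij])]; simp
  by_cases hg : g.Injective
  swap
  · obtain ⟨i, j, hij, hne⟩ := Function.not_injective_iff.1 hg
    rw [det_zero_of_column_eq hne (by simp [hij])]; simp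
  have hk : k < 6 := by
    have := Fintype.card_le_of_injective f hf
    simp at this; omega
  have hf' := (Tuple.monotone_sort f).strictMono_of_injective
    (hf.comp (Tuple.sort f).injective)
  have hg' := (Tuple.monotone_sort g).strictMono_of_injective
    (hg.comp (Tuple.sort g).injective)
  have := h k hk _ (fun i j hij => hf' hij) _ (fun i j hij => hg' hij)
  have e := dtZ_eq k ((A.submatrix f g).submatrix (Tuple.sort f) (Tuple.sort g))
  rw [← abs_det_submatrix_equiv_equiv (Tuple.sort f) (Tuple.sort g), e]
  exact this

lemma det_eq_zero_of_mul {m l : Type*} [Fintype m] [DecidableEq m] [Fintype l]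
    (P : Matrix m l ℤ) (Q : Matrix l m ℤ) (h : Fintype.card l < Fintype.card m) :
    (P * Q).det = 0 := by
  by_contra hd
  have h1 := rank_of_det_ne_zero hd
  have h2 := rank_mul_le_left P Q
  have h3 := rank_le_card_width P
  omega

lemma abs_mul_le_one' {x y : ℤ} (hx : |x| ≤ 1) (hy : |y| ≤ 1) : |x * y| ≤ 1 := by
  rw [abs_mul]; exact mul_le_one₀ hx (abs_nonneg _) hy

lemma twoSum_core {R₁ R₂ C₁ C₂ : Type*} [Fintype R₁] [Fintype R₂] [Fintype C₁] [Fintype C₂]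
    [DecidableEq R₁] [DecidableEq R₂] [DecidableEq C₁] [DecidableEq C₂]
    (A : Matrix R₁ C₁ ℤ) (a : Matrix R₁ Unit ℤ) (b : Matrix Unit C₂ ℤ) (B : Matrix R₂ C₂ ℤ)
    (hA : TUZ (fromCols A a)) (hB : TUZ (fromRows b B)) (σ : R₁ ⊕ R₂ ≃ C₁ ⊕ C₂) :
    |((fromBlocks A (a * b) 0 B).submatrix id σ).det| ≤ 1 := by
  have hc := Fintype.card_congr σ
  simp only [Fintype.card_sum] at hc
  rcases lt_or_ge (Fintype.card R₁) (Fintype.card C₁) with h | h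
  · have : fromBlocks A (a * b) 0 B = (fromBlocks 1 (a * b) 0 B : Matrix (R₁ ⊕ R₂) (R₁ ⊕ C₂) ℤ) *
        (fromBlocks A 0 0 1 : Matrix (R₁ ⊕ C₂) (C₁ ⊕ C₂) ℤ) := by
      simp [fromBlocks_multiply]
    rw [this, submatrix_mul _ _ id id σ Function.bijective_id, det_eq_zero_of_mul]
    · simp
    · simp only [Fintype.card_sum]; omega
  rcases eq_or_lt_of_le h with h | h
  · let e₁ : R₁ ≃ C₁ := Fintype.equivOfCardEq h.symm
    let e₂ : R₂ ≃ C₂ := Fintype.equivOfCardEq (by omega)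
    have key : (fromBlocks A (a * b) 0 B).submatrix id (Equiv.sumCongr e₁ e₂) =
        fromBlocks (A.submatrix id e₁) ((a * b).submatrix id e₂) 0 (B.submatrix id e₂) := by
      ext (i | i) (j | j) <;> simp
    have h1 := abs_det_submatrix_equiv_equiv (Equiv.refl _) (σ.trans (Equiv.sumCongr e₁ e₂).symm)
      ((fromBlocks A (a * b) 0 B).submatrix id (Equiv.sumCongr e₁ e₂))
    rw [submatrix_submatrix] at h1
    have h2 : (Equiv.sumCongr e₁ e₂) ∘ (σ.trans (Equiv.sumCongr e₁ e₂).symm) = σ := by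
      ext x; simp
    rw [h2] at h1
    change |((fromBlocks A (a * b) 0 B).submatrix id σ).det| = _ at h1
    rw [h1, key, det_fromBlocks_zero₂₁]
    exact abs_mul_le_one' (hA.fintype id (fun i => Sum.inl (e₁ i)))
      (hB.fintype (fun i => Sum.inr i) e₂)
  · have fac : fromBlocks A (a * b) 0 B =
        (fromBlocks (fromCols A a) 0 0 1 : Matrix (R₁ ⊕ R₂) ((C₁ ⊕ Unit) ⊕ R₂) ℤ) *
        (fromBlocks 1 0 0 (fromRows b B)).submatrix (Equiv.sumAssoc C₁ Unit R₂) id := by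
      ext (i | i) (j | j) <;> simp [Matrix.mul_apply, Matrix.one_apply]
    rcases eq_or_lt_of_le (Nat.succ_le_of_lt h) with h | h
    · let e₁ : R₁ ≃ C₁ ⊕ Unit := Fintype.equivOfCardEq (by simp; omega)
      let e₂ : C₂ ≃ Unit ⊕ R₂ := Fintype.equivOfCardEq (by simp; omega)
      let τ : R₁ ⊕ R₂ ≃ (C₁ ⊕ Unit) ⊕ R₂ := Equiv.sumCongr e₁ (Equiv.refl _)
      let ρ : (C₁ ⊕ C₂) ≃ C₁ ⊕ (Unit ⊕ R₂) := Equiv.sumCongr (Equiv.refl _) e₂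
      have s1 : (fromBlocks (fromCols A a) 0 0 1 : Matrix (R₁ ⊕ R₂) ((C₁ ⊕ Unit) ⊕ R₂) ℤ).submatrix id τ
          = fromBlocks ((fromCols A a).submatrix id e₁) 0 0 1 := by
        ext (i | i) (j | j) <;> simp [τ, Matrix.one_apply]
      have s2 : (fromBlocks 1 0 0 (fromRows b B) :
            Matrix (C₁ ⊕ (Unit ⊕ R₂)) (C₁ ⊕ C₂) ℤ).submatrix ρ id =
          fromBlocks 1 0 0 ((fromRows b B).submatrix e₂ id) := by
        ext (i | i) (j | j) <;> simp [ρ, Matrix.one_apply]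
      rw [fac, submatrix_mul _ _ id τ σ τ.bijective, det_mul, s1]
      refine abs_mul_le_one' ?_ ?_
      · simpa using hA.fintype id e₁
      · rw [submatrix_submatrix]
        have h3 := abs_det_submatrix_equiv_equiv
          ((τ.trans (Equiv.sumAssoc C₁ Unit R₂)).trans ρ.symm) σ
          ((fromBlocks 1 0 0 (fromRows b B) :
            Matrix (C₁ ⊕ (Unit ⊕ R₂)) (C₁ ⊕ C₂) ℤ).submatrix ρ id)
        rw [submatrix_submatrix] at h3
        have h4 : ρ ∘ ((τ.trans (Equiv.sumAssoc C₁ Unit R₂)).trans ρ.symm) =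
            (Equiv.sumAssoc C₁ Unit R₂) ∘ τ := by
          ext x; simp
        rw [h4] at h3
        rw [h3, s2, det_fromBlocks_zero₂₁, det_one, one_mul]
        exact hB.fintype e₂ id
    · rw [fac, submatrix_mul _ _ id id σ Function.bijective_id, det_eq_zero_of_mul]
      · simp
      · simp only [Fintype.card_sum, Fintype.card_unit]; omega

lemma TUZ_twoSum {m₁ m₂ n₁ n₂ : Type*}
    (A : Matrix m₁ n₁ ℤ) (a : Matrix m₁ Unit ℤ) (b : Matrix Unit n₂ ℤ) (B : Matrix m₂ n₂ ℤ)
    (hA : TUZ (fromCols A a)) (hB : TUZ (fromRows b B)) :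
    TUZ (fromBlocks A (a * b) 0 B) := by
  classical
  intro k f g
  let ef : Fin k ≃ {i // (f i).isLeft = true} ⊕ {i // ¬ (f i).isLeft = true} :=
    (Equiv.sumCompl (fun i => (f i).isLeft = true)).symm
  let eg : Fin k ≃ {i // (g i).isLeft = true} ⊕ {i // ¬ (g i).isLeft = true} :=
    (Equiv.sumCompl (fun i => (g i).isLeft = true)).symm
  let f₁ : {i // (f i).isLeft = true} → m₁ := fun i => (f i).getLeft i.2
  let f₂ : {i // ¬ (f i).isLeft = true} → m₂ := fun i => (f i).getRight (by simpa using i.2)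
  let g₁ : {i // (g i).isLeft = true} → n₁ := fun i => (g i).getLeft i.2
  let g₂ : {i // ¬ (g i).isLeft = true} → n₂ := fun i => (g i).getRight (by simpa using i.2)
  have hf : f ∘ ef.symm = Sum.map f₁ f₂ := by
    ext (i | i) <;> simp [ef, f₁, f₂]
  have hg : g ∘ eg.symm = Sum.map g₁ g₂ := by
    ext (i | i) <;> simp [eg, g₁, g₂]
  have core := twoSum_core (A.submatrix f₁ g₁) (a.submatrix f₁ id) (b.submatrix id g₂)
    (B.submatrix f₂ g₂) ?_ ?_ (ef.symm.trans eg)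
  · rw [← det_submatrix_equiv_self ef.symm, submatrix_submatrix, hf]
    convert core using 3
    have : g ∘ ef.symm = (Sum.map g₁ g₂) ∘ (ef.symm.trans eg) := by
      rw [← hg]; ext x; simp
    rw [this]
    ext i j
    simp only [submatrix_apply, Function.comp]
    generalize (ef.symm.trans eg) j = t
    rcases i with i | i <;> rcases t with t | t <;> simp [Matrix.mul_apply]
  · intro l p q
    convert hA l (f₁ ∘ p) (Sum.map g₁ id ∘ q) using 3
    ext i j
    simp only [submatrix_apply, Function.comp]
    rcases q j with t | t <;> simp
  · intro l p q
    convert hB l (Sum.map id f₂ ∘ p) (g₂ ∘ q) using 3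
    ext i j
    simp only [submatrix_apply, Function.comp]
    rcases p i with t | t <;> simp

def B1Z : Matrix (Fin 5) (Fin 5) ℤ :=
  !![0, 0, 1, -1, 1; 1, 0, 0, 1, -1; -1, 1, 0, 0, 1; 1, -1, 1, 0, 0; 0, 1, -1, 1, 0]

def B2Z : Matrix (Fin 5) (Fin 5) ℤ :=
  !![1, 1, 1, 1, 1; 1, 1, 1, 0, 0; 1, 0, 1, 1, 0; 1, 0, 0, 1, 1; 1, 1, 0, 0, 1]

/-- Check a Boolean predicate on all increasing `Fin k → Fin 5` with values at least `lo`. -/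
def allS : (k : ℕ) → ℕ → ((Fin k → Fin 5) → Bool) → Bool
  | 0, _, P => P Fin.elim0
  | k + 1, lo, P => (List.finRange 5).all fun a =>
      if lo ≤ a.val then allS k (a.val + 1) (fun f => P (Fin.cons a f)) else true

lemma allS_spec : ∀ (k lo : ℕ) (P : (Fin k → Fin 5) → Bool), allS k lo P = true →
    ∀ f : Fin k → Fin 5, (∀ i j, i < j → f i < f j) → (∀ i, lo ≤ (f i).val) → P f = true
  | 0, lo, P, h, f, _, _ => by
    rw [Subsingleton.elim f Fin.elim0]; exact h
  | k + 1, lo, P, h, f, hf, hlo => by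
    simp only [allS, List.all_eq_true] at h
    have h0 := h (f 0) (List.mem_finRange _)
    rw [if_pos (hlo 0)] at h0
    have := allS_spec k _ _ h0 (Fin.tail f)
      (fun i j hij => hf _ _ (Fin.succ_lt_succ_iff.2 hij))
      (fun i => hf 0 i.succ (Fin.succ_pos i))
    simpa only [Fin.cons_self_tail] using this

def sortedCheck (A : Matrix (Fin 5) (Fin 5) ℤ) (k : ℕ) : Bool :=
  allS k 0 fun f => allS k 0 fun g => decide (|dtZ k (fun i j => A (f i) (g j))| ≤ 1)

lemma sortedTU_of_check {A : Matrix (Fin 5) (Fin 5) ℤ} {k : ℕ} (h : sortedCheck A k = true) :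
    SortedTU A k := by
  intro f hf g hg
  have h1 := allS_spec k 0 _ h f hf (fun _ => Nat.zero_le _)
  have h2 := allS_spec k 0 _ h1 g hg (fun _ => Nat.zero_le _)
  exact of_decide_eq_true h2

lemma B1Z_check : ∀ k < 6, sortedCheck B1Z k = true := by decide +kernel

lemma B2Z_check : ∀ k < 6, sortedCheck B2Z k = true := by decide +kernel

lemma B1Z_sorted : ∀ k < 6, SortedTU B1Z k := fun k hk => sortedTU_of_check (B1Z_check k hk)

lemma B2Z_sorted : ∀ k < 6, SortedTU B2Z k := fun k hk => sortedTU_of_check (B2Z_check k hk)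

def MZ : Matrix (Fin 9) (Fin 9) ℤ :=
  !![0, 0, 1, -1, 1, 1, 1, 1, 1;
     1, 0, 0, 1, -1, -1, -1, -1, -1;
     -1, 1, 0, 0, 1, 1, 1, 1, 1;
     1, -1, 1, 0, 0, 0, 0, 0, 0;
     0, 1, -1, 1, 0, 0, 0, 0, 0;
     0, 0, 0, 0, 1, 1, 1, 0, 0;
     0, 0, 0, 0, 1, 0, 1, 1, 0;
     0, 0, 0, 0, 1, 0, 0, 1, 1;
     0, 0, 0, 0, 1, 1, 0, 0, 1]

lemma TUZ.submatrix {m n m' n' : Type*} {A : Matrix m n ℤ} (h : TUZ A) (p : m' → m)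
    (q : n' → n) : TUZ (A.submatrix p q) := fun k f g => h k (p ∘ f) (q ∘ g)

lemma TUZ_MZ : TUZ MZ := by
  have hA : TUZ (fromCols (B1Z.submatrix id Fin.castSucc)
      (B1Z.submatrix id (fun _ : Unit => Fin.last 4))) := by
    convert (TUZ_of_sorted B1Z_sorted).submatrix id
      (Sum.elim Fin.castSucc (fun _ : Unit => Fin.last 4)) using 1
    ext i (j | j) <;> simp
  have hB : TUZ (fromRows (B2Z.submatrix (fun _ : Unit => (0 : Fin 5)) id)
      (B2Z.submatrix Fin.succ id)) := by
    convert (TUZ_of_sorted B2Z_sorted).submatrix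
      (Sum.elim (fun _ : Unit => (0 : Fin 5)) Fin.succ) id using 1
    ext (i | i) j <;> simp
  convert (TUZ_twoSum _ _ _ _ hA hB).submatrix (finSumFinEquiv (m := 5) (n := 4)).symm
    (finSumFinEquiv (m := 4) (n := 5)).symm using 1
  decide +kernel

def M2 : Matrix (Fin 9) (Fin 9) (ZMod 2) := MZ.map (fun x => (x : ZMod 2))

lemma cogirth_aux : ∀ y : Fin 9 → ZMod 2, (∃ i, y i ≠ 0) →
    4 ≤ (Finset.univ.filter fun i => y i ≠ 0).card ∨
    4 ≤ (Finset.univ.filter fun i => y i ≠ 0).card +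
      (Finset.univ.filter fun j => ∑ i, y i * M2 i j ≠ 0).card := by
  decide +kernel

lemma cogirth (y : Fin 9 → ZMod 2) (hy : ∃ i, y i ≠ 0) :
    4 ≤ (Finset.univ.filter fun i => y i ≠ 0).card +
      (Finset.univ.filter fun j => ∑ i, y i * M2 i j ≠ 0).card := by
  rcases cogirth_aux y hy with h | h <;> omega

/-- integer version of the incidence matrix -/
def incZ {V E : Type*} [DecidableEq V] (tail head : E → V) (v : V) (e : E) : ℤ :=
  if head e = tail e then 0
    else (if v = head e then 1 else 0) - (if v = tail e then 1 else 0)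

lemma incZ_cast {V E : Type*} [DecidableEq V] (tail head : E → V) (v : V) (e : E) :
    digraphIncid tail head v e = (incZ tail head v e : ℝ) := by
  simp only [digraphIncid, incZ, Matrix.of_apply]
  split_ifs <;> simp

lemma incZ_two {V E : Type*} [DecidableEq V] (tail head : E → V) (v : V) (e : E)
    (h : ((incZ tail head v e : ℤ) : ZMod 2) = 0) : incZ tail head v e = 0 := by
  revert h
  simp only [incZ]
  split_ifs <;> simp

lemma incZ_col {V E : Type*} [DecidableEq V] [Fintype V] (tail head : E → V) (e : E) :
    ∑ v, incZ tail head v e = 0 := by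
  simp only [incZ]
  split_ifs <;> simp

lemma incZ_supp {V E : Type*} [DecidableEq V] [Fintype V] (tail head : E → V) (e : E) :
    (Finset.univ.filter fun v => incZ tail head v e ≠ 0).card ≤ 2 := by
  refine (Finset.card_le_card (t := {head e, tail e}) ?_).trans Finset.card_le_two
  intro v
  simp only [incZ, Finset.mem_filter, Finset.mem_univ, true_and, Finset.mem_insert,
    Finset.mem_singleton]
  intro h
  by_contra! hn
  simp [hn.1, hn.2] at h

lemma not_network : ¬ IsNetworkMatrix (MZ.map (fun x => (x : ℝ))) := by
  rintro ⟨tail, head, hu, hN⟩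
  set R : Matrix (Fin 9) (Fin 9) ℝ := (digraphIncid tail head).submatrix some Sum.inl with hR
  have hRN : R * MZ.map (fun x => (x : ℝ)) = (digraphIncid tail head).submatrix some Sum.inr := by
    rw [hN, Matrix.mul_nonsing_inv_cancel_left _ _ hu]
  let D := incZ tail head
  have hcol : ∀ e, D none e = - ∑ v : Fin 9, D (some v) e := by
    intro e
    have := incZ_col tail head e
    rw [Fintype.sum_option] at this
    simp only [D]; linarith
  have hsome : ∀ (v : Fin 9) j, D (some v) (Sum.inr j) = ∑ i, D (some v) (Sum.inl i) * MZ i j := by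
    intro v j
    have := congrFun (congrFun hRN v) j
    simp only [Matrix.mul_apply, hR, submatrix_apply, incZ_cast, map_apply] at this
    exact_mod_cast this.symm
  have hall : ∀ v j, D v (Sum.inr j) = ∑ i, D v (Sum.inl i) * MZ i j := by
    rintro (_ | v) j
    · rw [hcol]
      simp only [hcol, hsome, neg_mul, Finset.sum_neg_distrib, Finset.sum_mul]
      rw [Finset.sum_comm]
    · exact hsome v j
  have hne : ∀ v, ∃ i, D v (Sum.inl i) ≠ 0 := by
    by_contra! hcon
    obtain ⟨v, hv⟩ := hcon
    have hdet := hu.ne_zero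
    rcases v with _ | v
    · have hz : (1 : Fin 9 → ℝ) ᵥ* R = 0 := by
        ext i
        have h1 := hv i
        rw [hcol, neg_eq_zero] at h1
        simp only [vecMul, dotProduct, hR, submatrix_apply, incZ_cast, Pi.one_apply, one_mul,
          Pi.zero_apply]
        exact_mod_cast h1
      have := congrFun (eq_zero_of_vecMul_eq_zero hdet hz) 0
      simp at this
    · apply hdet
      refine det_eq_zero_of_row_eq_zero v fun i => ?_
      rw [hR, submatrix_apply, incZ_cast]
      exact_mod_cast hv i
  have hrow : ∀ v, 4 ≤ (Finset.univ.filter fun e => D v e ≠ 0).card := by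
    intro v
    obtain ⟨i, hi⟩ := hne v
    have h := cogirth (fun i => (D v (Sum.inl i) : ZMod 2)) ⟨i, fun h => hi (incZ_two _ _ _ _ h)⟩
    have hs : (Finset.univ.filter fun e => D v e ≠ 0).card =
        (Finset.univ.filter fun i => D v (Sum.inl i) ≠ 0).card +
        (Finset.univ.filter fun j => D v (Sum.inr j) ≠ 0).card := by
      simp only [Finset.card_filter, Fintype.sum_sum_type]
    rw [hs]
    refine h.trans (add_le_add (Finset.card_le_card ?_) (Finset.card_le_card ?_))
    · intro i
      simp only [Finset.mem_filter, Finset.mem_univ, true_and]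
      intro h h0
      exact h (by rw [h0]; simp)
    · intro j
      simp only [Finset.mem_filter, Finset.mem_univ, true_and]
      intro h h0
      apply h
      have := congrArg (fun x : ℤ => (x : ZMod 2)) (hall v j)
      simp only [h0] at this
      push_cast at this
      simpa [M2] using this.symm
  have h40 : ∑ _v : Option (Fin 9), 4 ≤
      ∑ v, (Finset.univ.filter fun e => D v e ≠ 0).card := Finset.sum_le_sum fun v _ => hrow v
  have h36 : ∑ e, (Finset.univ.filter fun v => D v e ≠ 0).card ≤
      ∑ _e : Fin 9 ⊕ Fin 9, 2 := Finset.sum_le_sum fun e _ => incZ_supp tail head e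
  simp only [Finset.card_filter] at h40 h36
  rw [Finset.sum_comm] at h40
  have := h40.trans h36
  simp at this

/-- The 2-sum `M = B₁ ⊕₂ B₂` of Seymour's two special totally unimodular building blocks
(along the last column of `B₁` and the first row of `B₂`) is totally unimodular but is not a
network matrix. -/
theorem twoSum_B1_B2_TU_not_network :
    IsTU (!![0, 0, 1, -1, 1, 1, 1, 1, 1;
             1, 0, 0, 1, -1, -1, -1, -1, -1;
             -1, 1, 0, 0, 1, 1, 1, 1, 1;
             1, -1, 1, 0, 0, 0, 0, 0, 0;
             0, 1, -1, 1, 0, 0, 0, 0, 0;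
             0, 0, 0, 0, 1, 1, 1, 0, 0;
             0, 0, 0, 0, 1, 0, 1, 1, 0;
             0, 0, 0, 0, 1, 0, 0, 1, 1;
             0, 0, 0, 0, 1, 1, 0, 0, 1] : Matrix (Fin 9) (Fin 9) ℝ) ∧
    ¬ IsNetworkMatrix (!![0, 0, 1, -1, 1, 1, 1, 1, 1;
             1, 0, 0, 1, -1, -1, -1, -1, -1;
             -1, 1, 0, 0, 1, 1, 1, 1, 1;
             1, -1, 1, 0, 0, 0, 0, 0, 0;
             0, 1, -1, 1, 0, 0, 0, 0, 0;
             0, 0, 0, 0, 1, 1, 1, 0, 0;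
             0, 0, 0, 0, 1, 0, 1, 1, 0;
             0, 0, 0, 0, 1, 0, 0, 1, 1;
             0, 0, 0, 0, 1, 1, 0, 0, 1] : Matrix (Fin 9) (Fin 9) ℝ) := by
  have hM : (!![0, 0, 1, -1, 1, 1, 1, 1, 1;
             1, 0, 0, 1, -1, -1, -1, -1, -1;
             -1, 1, 0, 0, 1, 1, 1, 1, 1;
             1, -1, 1, 0, 0, 0, 0, 0, 0;
             0, 1, -1, 1, 0, 0, 0, 0, 0;
             0, 0, 0, 0, 1, 1, 1, 0, 0;
             0, 0, 0, 0, 1, 0, 1, 1, 0;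
             0, 0, 0, 0, 1, 0, 0, 1, 1;
             0, 0, 0, 0, 1, 1, 0, 0, 1] : Matrix (Fin 9) (Fin 9) ℝ) =
      MZ.map (fun x => (x : ℝ)) := by
    ext i j
    fin_cases i <;> fin_cases j <;> simp [MZ]
  rw [hM]
  refine ⟨?_, not_network⟩
  intro k f g _ _
  have h := TUZ_MZ k f g
  have hd : ((MZ.map (fun x => (x : ℝ))).submatrix f g).det =
      (((MZ.submatrix f g).det : ℤ) : ℝ) := (Int.cast_det (R := ℝ) (MZ.submatrix f g)).symm
  rw [hd]
  generalize (MZ.submatrix f g).det = x at h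
  rw [abs_le] at h
  obtain ⟨h1, h2⟩ := h
  interval_cases x <;> simp
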